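/- Let H be a quasitriangular Hopf algebra with antipode γ (with γ invertible), R-matrix R, and involution τ. Suppose S• ∈ H⊗A is invertible and satisfies the conjugate characteristic equation (Δ^op⊗id)(S•) = S•₁₃ (R⁻¹)''₁₂ S•₂₃, where (R⁻¹)'' := (id⊗τ)(R⁻¹₂₁). Then S̄• := (S•)⁻¹ satisfies (Δ⊗id)(S̄•) = S̄•₁₃ ((τγ²)⊗id)(R)₁₂ S̄•₂₃; that is, S̄• is a universal S-matrix for H with the involution τ∘γ². -/

import Mathlib

open TensorProduct

section QT

variable (k H : Type*) [Field k] [Ring H] [Bialgebra k H]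

/-- `(Δ ⊗ id)` as a map `H ⊗ H → H ⊗ (H ⊗ H)`. -/
noncomputable def deltaL : H ⊗[k] H →ₗ[k] H ⊗[k] (H ⊗[k] H) :=
  (TensorProduct.assoc k H H H).toLinearMap ∘ₗ
    TensorProduct.map (Coalgebra.comul (R := k)) LinearMap.id

/-- `(id ⊗ Δ)` as a map `H ⊗ H → H ⊗ (H ⊗ H)`. -/
noncomputable def deltaR : H ⊗[k] H →ₗ[k] H ⊗[k] (H ⊗[k] H) :=
  TensorProduct.map LinearMap.id (Coalgebra.comul (R := k))

/-- embedding of `H ⊗ H` on legs 1, 2 of `H ⊗ H ⊗ H`. -/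
noncomputable def leg12 : H ⊗[k] H →ₗ[k] H ⊗[k] (H ⊗[k] H) :=
  TensorProduct.map LinearMap.id ((TensorProduct.mk k H H).flip (1 : H))

/-- embedding of `H ⊗ H` on legs 1, 3 of `H ⊗ H ⊗ H`. -/
noncomputable def leg13 : H ⊗[k] H →ₗ[k] H ⊗[k] (H ⊗[k] H) :=
  TensorProduct.map LinearMap.id (TensorProduct.mk k H H (1 : H))

/-- embedding of `H ⊗ H` on legs 2, 3 of `H ⊗ H ⊗ H`. -/
noncomputable def leg23 : H ⊗[k] H →ₗ[k] H ⊗[k] (H ⊗[k] H) :=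
  TensorProduct.mk k H (H ⊗[k] H) (1 : H)

/-- `R` (with two-sided inverse `Rinv`) is a universal R-matrix (quasitriangular
structure) on the bialgebra `H`. -/
noncomputable def IsUnivRMatrix (R Rinv : H ⊗[k] H) : Prop :=
  R * Rinv = 1 ∧ Rinv * R = 1 ∧
  deltaL k H R = leg13 k H R * leg23 k H R ∧
  deltaR k H R = leg13 k H R * leg12 k H R ∧
  ∀ h : H, R * Coalgebra.comul h =
    (TensorProduct.comm k H H) (Coalgebra.comul h) * R

/-- `τ` is an involutive coalgebra map and algebra anti-automorphism of `H`. -/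
noncomputable def IsSkewInvolution (τ : H →ₗ[k] H) : Prop :=
  (∀ x : H, τ (τ x) = x) ∧ (∀ x y : H, τ (x * y) = τ y * τ x) ∧ τ 1 = 1 ∧
  Coalgebra.comul (R := k) ∘ₗ τ = (TensorProduct.map τ τ) ∘ₗ Coalgebra.comul ∧
  Coalgebra.counit (R := k) ∘ₗ τ = Coalgebra.counit

end QT

section SMat

variable (k H A : Type*) [Field k] [Ring H] [Bialgebra k H] [Ring A] [Algebra k A]

/-- `(Δ ⊗ id) : H ⊗ A → H ⊗ (H ⊗ A)`. -/
noncomputable def deltaLA : H ⊗[k] A →ₗ[k] H ⊗[k] (H ⊗[k] A) :=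
  (TensorProduct.assoc k H H A).toLinearMap ∘ₗ
    TensorProduct.map (Coalgebra.comul (R := k)) LinearMap.id

/-- `(Δ^op ⊗ id) : H ⊗ A → H ⊗ (H ⊗ A)`. -/
noncomputable def deltaOpLA : H ⊗[k] A →ₗ[k] H ⊗[k] (H ⊗[k] A) :=
  (TensorProduct.assoc k H H A).toLinearMap ∘ₗ
    TensorProduct.map ((TensorProduct.comm k H H).toLinearMap ∘ₗ Coalgebra.comul (R := k))
      LinearMap.id

/-- embedding of `H ⊗ A` on legs 1, 3 of `H ⊗ H ⊗ A`:  `S ↦ S₁₃`. -/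
noncomputable def sleg13 : H ⊗[k] A →ₗ[k] H ⊗[k] (H ⊗[k] A) :=
  TensorProduct.map LinearMap.id (TensorProduct.mk k H A (1 : H))

/-- embedding of `H ⊗ A` on legs 2, 3 of `H ⊗ H ⊗ A`:  `S ↦ S₂₃`. -/
noncomputable def sleg23 : H ⊗[k] A →ₗ[k] H ⊗[k] (H ⊗[k] A) :=
  TensorProduct.mk k H (H ⊗[k] A) (1 : H)

/-- embedding of `H ⊗ H` on legs 1, 2 of `H ⊗ H ⊗ A`:  `R ↦ R₁₂`. -/
noncomputable def rleg12 : H ⊗[k] H →ₗ[k] H ⊗[k] (H ⊗[k] A) :=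
  TensorProduct.map LinearMap.id ((TensorProduct.mk k H A).flip (1 : A))

/-- `S ∈ H ⊗ A` is a universal S-matrix for `(H, R, τ)`: it satisfies the
characteristic identity `(Δ⊗id)(S) = S₁₃ R'₁₂ S₂₃` where `R' = (τ⊗id)(R)`. -/
noncomputable def IsSMatrix (R : H ⊗[k] H) (τ : H →ₗ[k] H) (S : H ⊗[k] A) : Prop :=
  deltaLA k H A S =
    sleg13 k H A S * rleg12 k H A ((TensorProduct.map τ LinearMap.id) R) * sleg23 k H A S

/-- `(ε ⊗ id) : H ⊗ A → A`. -/
noncomputable def epsA : H ⊗[k] A →ₗ[k] A :=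
  (TensorProduct.lid k A).toLinearMap ∘ₗ
    TensorProduct.map (Coalgebra.counit (R := k)) LinearMap.id

end SMat

/-!
Transposing the first two legs turns the conjugate equation into
`(Δ ⊗ id)(S) = S₂₃ ((τ ⊗ id)(R⁻¹))₁₂ S₁₃`, and inverting both sides restores the order of the legs.
What remains is to invert `(τ ⊗ id)(R⁻¹)`. An element `X` with `(Δ ⊗ id)(X) = X₁₃ X₂₃` makes
`f ↦ (f ⊗ id)(X)` multiplicative for convolution, so `(γ ⊗ id)(R) = R⁻¹`, because the antipode is
the convolution inverse of the identity. Therefore `(τ ⊗ id)(R⁻¹) = (τγ ⊗ id)(R)`, and since `τγ` is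
an algebra homomorphism, the inverse of this is `(τγ ⊗ id)(R⁻¹) = (τγ² ⊗ id)(R)`.
-/

section Convolution

open WithConv

/-- The contraction `x ⊗ y ⊗ a ↦ f x * g y ⊗ a`, which turns `Δ ⊗ id` into the convolution product
of `f` and `g` on the first leg. -/
noncomputable def contractLegs {k M A B : Type*} [CommSemiring k] [AddCommMonoid M] [Module k M]
    [AddCommMonoid A] [Module k A] [Semiring B] [Algebra k B] (f g : M →ₗ[k] B) :
    M ⊗[k] (M ⊗[k] A) →ₗ[k] B ⊗[k] A :=
  TensorProduct.map (LinearMap.mul' k B ∘ₗ TensorProduct.map f g) LinearMap.id ∘ₗ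
    (TensorProduct.assoc k M M A).symm.toLinearMap

variable {k H A B : Type*} [Field k] [Ring H] [Ring A] [Algebra k A] [Semiring B] [Algebra k B]

section Bialgebra

variable [Bialgebra k H]

theorem contractLegs_deltaLA (f g : WithConv (H →ₗ[k] B)) (X : H ⊗[k] A) :
    contractLegs f.ofConv g.ofConv (deltaLA k H A X) =
      TensorProduct.map (f * g).ofConv LinearMap.id X := by
  induction X using TensorProduct.induction_on with
  | zero => simp only [map_zero]
  | add X Y hX hY => simp only [map_add, hX, hY]
  | tmul h a => simp [contractLegs, deltaLA, LinearMap.convMul_apply]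

theorem contractLegs_sleg13_mul_sleg23 (f g : H →ₗ[k] B) (X Y : H ⊗[k] A) :
    contractLegs f g (sleg13 k H A X * sleg23 k H A Y) =
      TensorProduct.map f LinearMap.id X * TensorProduct.map g LinearMap.id Y := by
  induction X using TensorProduct.induction_on with
  | zero => simp only [map_zero, zero_mul]
  | add X X' hX hX' => simp only [map_add, add_mul, hX, hX']
  | tmul x a =>
    induction Y using TensorProduct.induction_on with
    | zero => simp only [map_zero, mul_zero]
    | add Y Y' hY hY' => simp only [map_add, mul_add, hY, hY']
    | tmul y b => simp [contractLegs, sleg13, sleg23]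

theorem map_convMul_of_deltaLA_eq {X : H ⊗[k] A}
    (hX : deltaLA k H A X = sleg13 k H A X * sleg23 k H A X) (f g : WithConv (H →ₗ[k] B)) :
    TensorProduct.map (f * g).ofConv LinearMap.id X =
      TensorProduct.map f.ofConv LinearMap.id X * TensorProduct.map g.ofConv LinearMap.id X := by
  rw [← contractLegs_deltaLA, hX, contractLegs_sleg13_mul_sleg23]

theorem map_convOne_of_deltaLA_eq {X : (H ⊗[k] A)ˣ}
    (hX : deltaLA k H A X = sleg13 k H A X * sleg23 k H A X) :
    TensorProduct.map (1 : WithConv (H →ₗ[k] H)).ofConv LinearMap.id (X : H ⊗[k] A) = 1 := by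
  have hmul := map_convMul_of_deltaLA_eq hX (1 : WithConv (H →ₗ[k] H)) (toConv LinearMap.id)
  rw [one_mul, ofConv_toConv, TensorProduct.map_id, LinearMap.id_apply] at hmul
  exact X.isUnit.mul_eq_right.mp hmul.symm

end Bialgebra

theorem map_antipode_of_deltaLA_eq [HopfAlgebra k H] {X : (H ⊗[k] A)ˣ}
    (hX : deltaLA k H A X = sleg13 k H A X * sleg23 k H A X) :
    TensorProduct.map (HopfAlgebra.antipode k) LinearMap.id (X : H ⊗[k] A) = ↑X⁻¹ := by
  have hmul := map_convMul_of_deltaLA_eq hX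
    (toConv (HopfAlgebra.antipode k)) (toConv LinearMap.id)
  rw [LinearMap.antipode_mul_id, map_convOne_of_deltaLA_eq hX, ofConv_toConv, ofConv_toConv,
    TensorProduct.map_id, LinearMap.id_apply] at hmul
  exact Units.eq_inv_of_mul_eq_one_right hmul.symm

end Convolution

section Legs

variable {k H A : Type*} [Field k] [Ring H] [Bialgebra k H] [Ring A] [Algebra k A]

theorem leftComm_sleg13 (X : H ⊗[k] A) :
    Algebra.TensorProduct.leftComm k H H A (sleg13 k H A X) = sleg23 k H A X := by
  induction X using TensorProduct.induction_on with
  | zero => simp only [map_zero]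
  | add X Y hX hY => simp only [map_add, hX, hY]
  | tmul h a => rfl

theorem leftComm_sleg23 (X : H ⊗[k] A) :
    Algebra.TensorProduct.leftComm k H H A (sleg23 k H A X) = sleg13 k H A X := by
  induction X using TensorProduct.induction_on with
  | zero => simp only [map_zero]
  | add X Y hX hY => simp only [map_add, hX, hY]
  | tmul h a => rfl

theorem leftComm_rleg12_comm (X : H ⊗[k] H) :
    Algebra.TensorProduct.leftComm k H H A (rleg12 k H A (TensorProduct.comm k H H X)) =
      rleg12 k H A X := by
  induction X using TensorProduct.induction_on with
  | zero => simp only [map_zero]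
  | add X Y hX hY => simp only [map_add, hX, hY]
  | tmul x y => rfl

theorem leftComm_deltaOpLA (X : H ⊗[k] A) :
    Algebra.TensorProduct.leftComm k H H A (deltaOpLA k H A X) = deltaLA k H A X := by
  have leftComm_assoc_comm (Y : H ⊗[k] H) (a : A) :
      Algebra.TensorProduct.leftComm k H H A
          (TensorProduct.assoc k H H A (TensorProduct.comm k H H Y ⊗ₜ a)) =
        TensorProduct.assoc k H H A (Y ⊗ₜ a) := by
    induction Y using TensorProduct.induction_on with
    | zero => simp only [map_zero, TensorProduct.zero_tmul]
    | add Y Z hY hZ => simp only [map_add, TensorProduct.add_tmul, hY, hZ]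
    | tmul x y => rfl
  induction X using TensorProduct.induction_on with
  | zero => simp only [map_zero]
  | add X Y hX hY => simp only [map_add, hX, hY]
  | tmul h a => exact leftComm_assoc_comm (Coalgebra.comul h) a

theorem deltaLA_eq_of_deltaOpLA_eq {S : H ⊗[k] A} {X : H ⊗[k] H}
    (hS : deltaOpLA k H A S =
      sleg13 k H A S * rleg12 k H A (TensorProduct.comm k H H X) * sleg23 k H A S) :
    deltaLA k H A S = sleg23 k H A S * rleg12 k H A X * sleg13 k H A S := by
  rw [← leftComm_deltaOpLA, hS, map_mul, map_mul, leftComm_sleg13, leftComm_rleg12_comm,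
    leftComm_sleg23]

variable (k H A)

/-- `deltaLA`, the map `Δ ⊗ id`, as an algebra homomorphism. -/
noncomputable def deltaLAAlgHom : H ⊗[k] A →ₐ[k] H ⊗[k] (H ⊗[k] A) :=
  (Algebra.TensorProduct.assoc k k k H H A).toAlgHom.comp
    (Algebra.TensorProduct.map (Bialgebra.comulAlgHom k H) (AlgHom.id k A))

/-- `sleg13`, the embedding on legs 1 and 3, as an algebra homomorphism. -/
noncomputable def sleg13AlgHom : H ⊗[k] A →ₐ[k] H ⊗[k] (H ⊗[k] A) :=
  Algebra.TensorProduct.map (AlgHom.id k H) Algebra.TensorProduct.includeRight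

/-- `sleg23`, the embedding on legs 2 and 3, as an algebra homomorphism. -/
noncomputable def sleg23AlgHom : H ⊗[k] A →ₐ[k] H ⊗[k] (H ⊗[k] A) :=
  Algebra.TensorProduct.includeRight

/-- `rleg12`, the embedding on legs 1 and 2, as an algebra homomorphism. -/
noncomputable def rleg12AlgHom : H ⊗[k] H →ₐ[k] H ⊗[k] (H ⊗[k] A) :=
  Algebra.TensorProduct.map (AlgHom.id k H) Algebra.TensorProduct.includeLeft

variable {k H A}

theorem deltaLA_inv_eq {S : (H ⊗[k] A)ˣ} {P : (H ⊗[k] H)ˣ}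
    (hS : deltaLA k H A S = sleg23 k H A S * rleg12 k H A P * sleg13 k H A S) :
    deltaLA k H A ↑S⁻¹ = sleg13 k H A ↑S⁻¹ * rleg12 k H A ↑P⁻¹ * sleg23 k H A ↑S⁻¹ := by
  let Δ : H ⊗[k] A →* H ⊗[k] (H ⊗[k] A) := deltaLAAlgHom k H A
  let ι₁₃ : H ⊗[k] A →* H ⊗[k] (H ⊗[k] A) := sleg13AlgHom k H A
  let ι₂₃ : H ⊗[k] A →* H ⊗[k] (H ⊗[k] A) := sleg23AlgHom k H A
  let ι₁₂ : H ⊗[k] H →* H ⊗[k] (H ⊗[k] A) := rleg12AlgHom k H A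
  have hunits : Units.map Δ S = Units.map ι₂₃ S * Units.map ι₁₂ P * Units.map ι₁₃ S := Units.ext hS
  have hinv : Units.map Δ S⁻¹ = Units.map ι₁₃ S⁻¹ * Units.map ι₁₂ P⁻¹ * Units.map ι₂₃ S⁻¹ := by
    rw [map_inv, hunits, mul_inv_rev, mul_inv_rev, ← mul_assoc, map_inv, map_inv, map_inv]
  exact congrArg Units.val hinv

end Legs

section SkewInvolution

/-- The composite `τ ∘ γ` of a unital algebra anti-homomorphism `τ` with the antipode, as an algebra
homomorphism. -/
noncomputable def compAntipodeAlgHom {k H B : Type*} [CommSemiring k] [Semiring H]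
    [HopfAlgebra k H] [Semiring B] [Algebra k B] (τ : H →ₗ[k] B) (hτ_one : τ 1 = 1)
    (hτ_mul : ∀ x y : H, τ (x * y) = τ y * τ x) : H →ₐ[k] B :=
  AlgHom.ofLinearMap (τ ∘ₗ HopfAlgebra.antipode k)
    (by rw [LinearMap.comp_apply, HopfAlgebra.antipode_one, hτ_one])
    (fun x y ↦ by
      simp only [LinearMap.comp_apply, HopfAlgebra.antipode_mul_antidistrib, hτ_mul])

variable {k H A : Type*} [Field k] [Ring H] [HopfAlgebra k H] [Ring A] [Algebra k A]

theorem conjugate_SMatrix_inverse_general {R : (H ⊗[k] H)ˣ}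
    (hR : deltaL k H R = leg13 k H R * leg23 k H R)
    {τ : H →ₗ[k] H} (hτ_one : τ 1 = 1) (hτ_mul : ∀ x y : H, τ (x * y) = τ y * τ x)
    {S : (H ⊗[k] A)ˣ}
    (hS : deltaOpLA k H A S =
      sleg13 k H A S *
        rleg12 k H A (TensorProduct.map LinearMap.id τ (TensorProduct.comm k H H ↑R⁻¹)) *
        sleg23 k H A S) :
    IsSMatrix k H A R (τ ∘ₗ HopfAlgebra.antipode k ∘ₗ HopfAlgebra.antipode k) ↑S⁻¹ := by
  let τγ := compAntipodeAlgHom τ hτ_one hτ_mul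
  let P : (H ⊗[k] H)ˣ :=
    Units.map (Algebra.TensorProduct.map τγ (AlgHom.id k H) : H ⊗[k] H →* H ⊗[k] H) R
  have hγR : TensorProduct.map (HopfAlgebra.antipode k) LinearMap.id (R : H ⊗[k] H) = ↑R⁻¹ :=
    map_antipode_of_deltaLA_eq hR
  have hP : TensorProduct.map τ LinearMap.id (↑R⁻¹ : H ⊗[k] H) = P := by
    rw [← hγR, TensorProduct.map_map]
    rfl
  have hPinv : TensorProduct.map (τ ∘ₗ HopfAlgebra.antipode k ∘ₗ HopfAlgebra.antipode k)
      LinearMap.id (R : H ⊗[k] H) = ↑P⁻¹ :=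
    calc _ = TensorProduct.map (τ ∘ₗ HopfAlgebra.antipode k) LinearMap.id (↑R⁻¹ : H ⊗[k] H) := by
          rw [← hγR, TensorProduct.map_map]
          rfl
      _ = ↑P⁻¹ := rfl
  rw [TensorProduct.map_comm, hP] at hS
  rw [IsSMatrix, hPinv]
  exact deltaLA_inv_eq (deltaLA_eq_of_deltaOpLA_eq hS)

end SkewInvolution

/-- let `H` be a quasitriangular Hopf algebra with invertible antipode `γ`,
R-matrix `R` and involution `τ`.  If `S• ∈ H ⊗ A` is invertible and satisfies the
conjugate characteristic equation `(Δ^op⊗id)(S•) = S•₁₃ (R⁻¹)''₁₂ S•₂₃`, where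
`(R⁻¹)'' = (id⊗τ)(R⁻¹₂₁)`, then its inverse `S̄•` satisfies
`(Δ⊗id)(S̄•) = S̄•₁₃ ((τγ²)⊗id)(R)₁₂ S̄•₂₃`, i.e. `S̄•` is a universal S-matrix for `H`
with the involution `τ ∘ γ²`. -/
theorem conjugate_SMatrix_inverse
    {k H A : Type*} [Field k] [Ring H] [HopfAlgebra k H] [Ring A] [Algebra k A]
    (γinv : H →ₗ[k] H)
    (hγ1 : ∀ h : H, γinv (HopfAlgebra.antipode (R := k) h) = h)
    (hγ2 : ∀ h : H, HopfAlgebra.antipode (R := k) (γinv h) = h)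
    (R Rinv : H ⊗[k] H) (hR : IsUnivRMatrix k H R Rinv)
    (τ : H →ₗ[k] H) (hτ : IsSkewInvolution k H τ)
    (Sb SbInv : H ⊗[k] A)
    (hSb1 : Sb * SbInv = 1) (hSb2 : SbInv * Sb = 1)
    (hchar : deltaOpLA k H A Sb =
      sleg13 k H A Sb *
        rleg12 k H A ((TensorProduct.map LinearMap.id τ) ((TensorProduct.comm k H H) Rinv)) *
        sleg23 k H A Sb) :
    deltaLA k H A SbInv =
      sleg13 k H A SbInv *
        rleg12 k H A ((TensorProduct.map
          (τ ∘ₗ (HopfAlgebra.antipode (R := k) (A := H)) ∘ₗ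
            (HopfAlgebra.antipode (R := k) (A := H))) LinearMap.id) R) *
        sleg23 k H A SbInv := by
  obtain ⟨hRRinv, hRinvR, hΔR, -, -⟩ := hR
  obtain ⟨-, hτ_mul, hτ_one, -, -⟩ := hτ
  exact conjugate_SMatrix_inverse_general (R := ⟨R, Rinv, hRRinv, hRinvR⟩)
    (S := ⟨Sb, SbInv, hSb1, hSb2⟩) hΔR hτ_one hτ_mul hchar
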